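/- arXiv:2004.14270 — 5 statements merged into one kernel-verified Lean document; each statement's English description precedes it below -/
import Mathlib

section
/- Let Q be a real symmetric positive semidefinite N×N matrix of rank k, and let k₁, …, kₙ be nonnegative integers with k₁ + ⋯ + kₙ = k. Then the map sending an n-tuple (Q₁, …, Qₙ) of positive semidefinite symmetric matrices with Q₁ + ⋯ + Qₙ = Q and rank Qᵢ = kᵢ for each i to the flag (range Q₁ ⊆ range(Q₁ + Q₂) ⊆ ⋯ ⊆ range(Q₁ + ⋯ + Q_{n−1})) is a bijection onto the set of flags of linear subspaces V₁ ⊆ V₂ ⊆ ⋯ ⊆ V_{n−1} ⊆ range Q with dim Vᵢ = k₁ + ⋯ + kᵢ. -/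
open scoped Matrix

noncomputable section

/-!
The heart of the matter is the case of two summands: a positive semidefinite `Q` and a subspace
`V ≤ range Q` determine exactly one Hermitian `A` with `range A = V` and
`rank A + rank (Q - A) = rank Q`. Rank additivity means that `range Q` is the direct sum of
`range A` and `range (Q - A)`. If the columns of `Q * X` form a basis of `V`, then `(Q - A) * X` has
its columns in both summands, so `A * X = Q * X`, and this forces `A = Q X (Xᴴ Q X)⁻¹ Xᴴ Q`.
Conversely, this matrix has the required properties, and its complement in `Q` is positive
semidefinite.

Rank additivity passes to partial sums, so the flag determines every partial sum, hence every
summand. A flag is realised by splitting off its largest member and inducting on its length.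
-/

open Matrix Module

section RankAdditivity

variable {K m n α : Type*} [Field K] [Fintype n]

theorem eq_zero_of_rank_eq_zero {A : Matrix m n K} (hA : A.rank = 0) : A = 0 := by
  rw [Matrix.rank, Submodule.finrank_eq_zero, LinearMap.range_eq_bot] at hA
  exact ext_iff_mulVec.2 fun v => (LinearMap.congr_fun hA v).trans (zero_mulVec v).symm

theorem range_mulVecLin_add_le (A B : Matrix m n K) :
    LinearMap.range (A + B).mulVecLin ≤
      LinearMap.range A.mulVecLin ⊔ LinearMap.range B.mulVecLin := by
  rw [mulVecLin_add]
  exact LinearMap.range_add_le _ _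

theorem rank_add_le_rank_add_rank (A B : Matrix m n K) : (A + B).rank ≤ A.rank + B.rank :=
  (Submodule.finrank_mono (range_mulVecLin_add_le A B)).trans
    (Submodule.finrank_add_le_finrank_add_finrank _ _)

theorem rank_sum_le_sum_rank (s : Finset α) (A : α → Matrix m n K) :
    (∑ a ∈ s, A a).rank ≤ ∑ a ∈ s, (A a).rank :=
  Finset.le_sum_of_subadditive _ rank_zero.le rank_add_le_rank_add_rank _ _

theorem rank_add_rank_sub_eq_iff (A Q : Matrix m n K) :
    A.rank + (Q - A).rank = Q.rank ↔
      LinearMap.range A.mulVecLin ≤ LinearMap.range Q.mulVecLin ∧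
        Disjoint (LinearMap.range A.mulVecLin) (LinearMap.range (Q - A).mulVecLin) := by
  have finrank_sup := Submodule.finrank_sup_add_finrank_inf_eq
    (LinearMap.range A.mulVecLin) (LinearMap.range (Q - A).mulVecLin)
  have range_le : LinearMap.range Q.mulVecLin ≤
      LinearMap.range A.mulVecLin ⊔ LinearMap.range (Q - A).mulVecLin := by
    simpa only [add_sub_cancel] using range_mulVecLin_add_le A (Q - A)
  simp only [Matrix.rank]
  constructor
  · intro h
    have sup_eq := Submodule.eq_of_le_of_finrank_le range_le (by lia)
    refine ⟨sup_eq ▸ le_sup_left, ?_⟩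
    rw [← sup_eq, h] at finrank_sup
    rw [disjoint_iff, ← Submodule.finrank_eq_zero (R := K)]
    lia
  · rintro ⟨hA, hdisj⟩
    have hsub : LinearMap.range (Q - A).mulVecLin ≤ LinearMap.range Q.mulVecLin := by
      rintro _ ⟨v, rfl⟩
      rw [mulVecLin_apply, sub_mulVec]
      exact sub_mem ⟨v, rfl⟩ (hA ⟨v, rfl⟩)
    rw [range_le.antisymm (sup_le hA hsub), ← finrank_sup, hdisj.eq_bot, finrank_bot, add_zero]

variable {s t : Finset α} {A : α → Matrix m n K}

theorem rank_sum_eq_of_subset (hst : s ⊆ t) (h : (∑ a ∈ t, A a).rank = ∑ a ∈ t, (A a).rank) :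
    (∑ a ∈ s, A a).rank = ∑ a ∈ s, (A a).rank := by
  classical
  have hs := rank_sum_le_sum_rank s A
  have hts := rank_sum_le_sum_rank (t \ s) A
  have hadd := rank_add_le_rank_add_rank (∑ a ∈ t \ s, A a) (∑ a ∈ s, A a)
  rw [Finset.sum_sdiff hst, h, ← Finset.sum_sdiff hst] at hadd
  lia

theorem rank_sum_add_rank_sub_of_subset (hst : s ⊆ t)
    (h : (∑ a ∈ t, A a).rank = ∑ a ∈ t, (A a).rank) :
    (∑ a ∈ s, A a).rank + (∑ a ∈ t, A a - ∑ a ∈ s, A a).rank = (∑ a ∈ t, A a).rank := by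
  classical
  rw [← Finset.sum_sdiff_eq_sub hst, rank_sum_eq_of_subset hst h,
    rank_sum_eq_of_subset Finset.sdiff_subset h, h, add_comm, Finset.sum_sdiff hst]

theorem range_sum_mulVecLin_le_of_subset (hst : s ⊆ t)
    (h : (∑ a ∈ t, A a).rank = ∑ a ∈ t, (A a).rank) :
    LinearMap.range (∑ a ∈ s, A a).mulVecLin ≤ LinearMap.range (∑ a ∈ t, A a).mulVecLin :=
  ((rank_add_rank_sub_eq_iff _ _).1 (rank_sum_add_rank_sub_of_subset hst h)).1

theorem exists_mulVec_injective_range_mul_eq [Finite m] {Q : Matrix m n K} {V : Submodule K (m → K)}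
    (hV : V ≤ LinearMap.range Q.mulVecLin) :
    ∃ X : Matrix n (Fin (finrank K V)) K,
      Function.Injective (Q * X).mulVec ∧ LinearMap.range (Q * X).mulVecLin = V := by
  let b := finBasis K V
  choose x hx using fun j => hV (b j).2
  have hcol : (Q * (of x)ᵀ).col = V.subtype ∘ b := funext fun j => hx j
  refine ⟨(of x)ᵀ, ?_, ?_⟩
  · rw [mulVec_injective_iff, hcol]
    exact b.linearIndependent.map' _ V.ker_subtype
  · rw [range_mulVecLin, hcol, Set.range_comp, Submodule.span_image, b.span_eq,
      Submodule.map_subtype_top]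

end RankAdditivity

section Nystrom

theorem range_mulVecLin_mul_le {R l m n : Type*} [CommSemiring R] [Fintype m] [Fintype n]
    (A : Matrix l m R) (B : Matrix m n R) :
    LinearMap.range (A * B).mulVecLin ≤ LinearMap.range A.mulVecLin := by
  rw [mulVecLin_mul]
  exact LinearMap.range_comp_le_range _ _

variable {R ι κ : Type*} [CommRing R] [StarRing R] [Fintype ι] [Fintype κ] [DecidableEq κ]

/-- The Nyström approximation `Q X (Xᴴ Q X)⁻¹ Xᴴ Q` of `Q` along the columns of `X`. It agrees with
`Q` on these columns, and serves as the summand of `Q` with range `range (Q * X)`. The inverse is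
Mathlib's, hence `0` if `Xᴴ * Q * X` is singular. -/
def nystromApprox (Q : Matrix ι ι R) (X : Matrix ι κ R) : Matrix ι ι R :=
  Q * X * (Xᴴ * Q * X)⁻¹ * (Xᴴ * Q)

variable {Q : Matrix ι ι R} {X : Matrix ι κ R}

theorem nystromApprox_mul_self (hX : IsUnit (Xᴴ * Q * X)) : nystromApprox Q X * X = Q * X := by
  rw [nystromApprox, Matrix.mul_assoc _ (Xᴴ * Q),
    nonsing_inv_mul_cancel_right _ _ ((isUnit_iff_isUnit_det _).1 hX)]

theorem conjTranspose_mul_nystromApprox (hX : IsUnit (Xᴴ * Q * X)) :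
    Xᴴ * nystromApprox Q X = Xᴴ * Q := by
  simp only [nystromApprox, ← Matrix.mul_assoc]
  rw [mul_nonsing_inv _ ((isUnit_iff_isUnit_det _).1 hX), Matrix.one_mul]

theorem conjTranspose_mul_sub_nystromApprox (hX : IsUnit (Xᴴ * Q * X)) :
    Xᴴ * (Q - nystromApprox Q X) = 0 := by
  rw [Matrix.mul_sub, conjTranspose_mul_nystromApprox hX, sub_self]

theorem range_nystromApprox (hX : IsUnit (Xᴴ * Q * X)) :
    LinearMap.range (nystromApprox Q X).mulVecLin = LinearMap.range (Q * X).mulVecLin := by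
  apply le_antisymm
  · rw [nystromApprox, Matrix.mul_assoc (Q * X)]
    exact range_mulVecLin_mul_le _ _
  · rw [← nystromApprox_mul_self hX]
    exact range_mulVecLin_mul_le _ _

theorem disjoint_range_mul_range_of_conjTranspose_mul_eq_zero (hX : IsUnit (Xᴴ * Q * X))
    {B : Matrix ι ι R} (hB : Xᴴ * B = 0) :
    Disjoint (LinearMap.range (Q * X).mulVecLin) (LinearMap.range B.mulVecLin) := by
  rw [Submodule.disjoint_def]
  rintro _ ⟨c, rfl⟩ ⟨y, hy⟩
  simp only [mulVecLin_apply] at hy ⊢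
  have hc : (Xᴴ * Q * X) *ᵥ c = (Xᴴ * Q * X) *ᵥ 0 := by
    rw [Matrix.mul_assoc, ← mulVec_mulVec, ← hy, mulVec_mulVec, hB, zero_mulVec, mulVec_zero]
  rw [mulVec_injective_of_isUnit hX hc, mulVec_zero]

theorem eq_nystromApprox_of_range_eq_of_disjoint {A : Matrix ι ι R} (hQ : Q.IsHermitian)
    (hA : A.IsHermitian) (hX : IsUnit (Xᴴ * Q * X))
    (hrange : LinearMap.range A.mulVecLin = LinearMap.range (Q * X).mulVecLin)
    (hdisj : Disjoint (LinearMap.range A.mulVecLin) (LinearMap.range (Q - A).mulVecLin)) :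
    A = nystromApprox Q X := by
  have agree : Q * X = A * X := by
    rw [← sub_eq_zero, ← Matrix.sub_mul, ext_iff_mulVec]
    intro v
    rw [zero_mulVec]
    refine Submodule.disjoint_def.1 hdisj _ ?_ (range_mulVecLin_mul_le _ _ ⟨v, rfl⟩)
    rw [Matrix.sub_mul, sub_mulVec]
    exact sub_mem (hrange ▸ ⟨v, rfl⟩) (range_mulVecLin_mul_le _ _ ⟨v, rfl⟩)
  have agree_left : Xᴴ * (A - nystromApprox Q X) = 0 := by
    have := congrArg conjTranspose agree
    rw [conjTranspose_mul, conjTranspose_mul, hQ.eq, hA.eq] at this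
    rw [Matrix.mul_sub, conjTranspose_mul_nystromApprox hX, this, sub_self]
  rw [← sub_eq_zero, ext_iff_mulVec]
  intro v
  rw [zero_mulVec]
  refine Submodule.disjoint_def.1
    (disjoint_range_mul_range_of_conjTranspose_mul_eq_zero hX agree_left) _ ?_ ⟨v, rfl⟩
  rw [sub_mulVec]
  exact sub_mem (hrange ▸ ⟨v, rfl⟩) (range_nystromApprox hX ▸ ⟨v, rfl⟩)

variable [PartialOrder R]

theorem posSemidef_nystromApprox (hQ : Q.PosSemidef) : (nystromApprox Q X).PosSemidef := by
  have := (hQ.conjTranspose_mul_mul_same X).inv.conjTranspose_mul_mul_same (Xᴴ * Q)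
  rwa [conjTranspose_mul, conjTranspose_conjTranspose, hQ.isHermitian.eq] at this

theorem posSemidef_sub_nystromApprox (hQ : Q.PosSemidef) (hX : IsUnit (Xᴴ * Q * X)) :
    (Q - nystromApprox Q X).PosSemidef := by
  classical
  let P := X * (Xᴴ * Q * X)⁻¹ * (Xᴴ * Q)
  have hP : Q * (1 - P) = Q - nystromApprox Q X := by
    simp only [P, nystromApprox, Matrix.mul_sub, Matrix.mul_one, Matrix.mul_assoc]
  have horth : Pᴴ * (Q - nystromApprox Q X) = 0 := by
    simp only [P, conjTranspose_mul, Matrix.mul_assoc, conjTranspose_mul_sub_nystromApprox hX,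
      Matrix.mul_zero]
  have := hQ.conjTranspose_mul_mul_same (1 - P)
  rwa [Matrix.mul_assoc, hP, conjTranspose_sub, conjTranspose_one, Matrix.sub_mul, horth,
    Matrix.one_mul, sub_zero] at this

end Nystrom

section PosSemidef

open scoped ComplexOrder

variable {𝕜 ι : Type*} [RCLike 𝕜] [Fintype ι] {Q : Matrix ι ι 𝕜}

theorem isUnit_conjTranspose_mul_mul {κ : Type*} [Fintype κ] [DecidableEq κ] {X : Matrix ι κ 𝕜}
    (hQ : Q.PosSemidef) (hX : Function.Injective (Q * X).mulVec) : IsUnit (Xᴴ * Q * X) := by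
  rw [← mulVec_injective_iff_isUnit, ← coe_mulVecLin, ← LinearMap.ker_eq_bot,
    LinearMap.ker_eq_bot']
  intro c hc
  refine hX ?_
  rw [mulVec_zero, ← mulVec_mulVec, ← hQ.dotProduct_mulVec_zero_iff]
  calc star (X *ᵥ c) ⬝ᵥ Q *ᵥ X *ᵥ c = star c ⬝ᵥ (Xᴴ * Q * X) *ᵥ c := by
        rw [star_mulVec, ← dotProduct_mulVec, mulVec_mulVec, mulVec_mulVec]
    _ = 0 := by rw [← mulVecLin_apply, hc, dotProduct_zero]

theorem exists_posSemidef_summand_range_eq (hQ : Q.PosSemidef) {V : Submodule 𝕜 (ι → 𝕜)}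
    (hV : V ≤ LinearMap.range Q.mulVecLin) :
    ∃ A : Matrix ι ι 𝕜, A.PosSemidef ∧ (Q - A).PosSemidef ∧
      LinearMap.range A.mulVecLin = V ∧ A.rank + (Q - A).rank = Q.rank := by
  obtain ⟨X, hinj, hXV⟩ := exists_mulVec_injective_range_mul_eq hV
  have hX := isUnit_conjTranspose_mul_mul hQ hinj
  have hrange := range_nystromApprox hX
  refine ⟨nystromApprox Q X, posSemidef_nystromApprox hQ, posSemidef_sub_nystromApprox hQ hX,
    hrange.trans hXV, (rank_add_rank_sub_eq_iff _ _).2 ⟨?_, ?_⟩⟩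
  · rwa [hrange, hXV]
  · rw [hrange]
    exact disjoint_range_mul_range_of_conjTranspose_mul_eq_zero hX
      (conjTranspose_mul_sub_nystromApprox hX)

theorem eq_of_range_eq_of_rank_add_rank_sub_eq (hQ : Q.PosSemidef) {A B : Matrix ι ι 𝕜}
    (hA : A.IsHermitian) (hB : B.IsHermitian)
    (hAQ : A.rank + (Q - A).rank = Q.rank) (hBQ : B.rank + (Q - B).rank = Q.rank)
    (hrange : LinearMap.range A.mulVecLin = LinearMap.range B.mulVecLin) : A = B := by
  obtain ⟨hle, hdisjA⟩ := (rank_add_rank_sub_eq_iff _ _).1 hAQ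
  have hdisjB := ((rank_add_rank_sub_eq_iff _ _).1 hBQ).2
  obtain ⟨X, hinj, hXA⟩ := exists_mulVec_injective_range_mul_eq hle
  have hX := isUnit_conjTranspose_mul_mul hQ hinj
  rw [eq_nystromApprox_of_range_eq_of_disjoint hQ.isHermitian hA hX hXA.symm hdisjA,
    eq_nystromApprox_of_range_eq_of_disjoint hQ.isHermitian hB hX
      (hrange.symm.trans hXA.symm) hdisjB]

end PosSemidef

section Flag

open scoped ComplexOrder

variable {𝕜 ι : Type*} [RCLike 𝕜] [Fintype ι] {n : ℕ}

/-- The decompositions of `Q` into positive semidefinite summands of ranks `k i`. -/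
def psdDecompositions (Q : Matrix ι ι 𝕜) (k : Fin n → ℕ) : Set (Fin n → Matrix ι ι 𝕜) :=
  {Qs | (∀ i, (Qs i).PosSemidef) ∧ ∑ i, Qs i = Q ∧ ∀ i, (Qs i).rank = k i}

/-- The flag of ranges of the proper partial sums. The number of summands is written as `n + 1`, and
the flag is indexed by `Fin n`, the full sum being left out. -/
def partialSumFlag (Qs : Fin (n + 1) → Matrix ι ι 𝕜) (i : Fin n) : Submodule 𝕜 (ι → 𝕜) :=
  LinearMap.range (∑ j ≤ i.castSucc, Qs j).mulVecLin

/-- The flags in `W` with dimensions the proper partial sums of `k`: the partial flag variety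
`Fl_{k₁, k₁ + k₂, …}(W)` if `k` sums to `finrank W`. -/
def partialFlags {K E : Type*} [Field K] [AddCommGroup E] [Module K E] (W : Submodule K E)
    (k : Fin (n + 1) → ℕ) : Set (Fin n → Submodule K E) :=
  {F | Monotone F ∧ (∀ i, F i ≤ W) ∧ ∀ i, finrank K (F i) = ∑ j ≤ i.castSucc, k j}

theorem eq_of_sum_Iic_eq {α M : Type*} [PartialOrder α] [LocallyFiniteOrderBot α]
    [WellFoundedLT α] [AddCommMonoid M] [IsRightCancelAdd M] {f g : α → M}
    (h : ∀ a, ∑ b ≤ a, f b = ∑ b ≤ a, g b) : f = g := by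
  funext a
  induction a using WellFoundedLT.induction with
  | ind a ih =>
    have hlt : ∑ b < a, f b = ∑ b < a, g b :=
      Finset.sum_congr rfl fun b hb => ih b (Finset.mem_Iio.1 hb)
    have ha := h a
    rw [← Finset.add_sum_Iio_eq_sum_Iic, ← Finset.add_sum_Iio_eq_sum_Iic, hlt] at ha
    exact add_right_cancel ha

variable {Q : Matrix ι ι 𝕜}

theorem rank_sum_eq_of_mem_psdDecompositions {k : Fin n → ℕ} (hk : ∑ i, k i = Q.rank)
    {Qs : Fin n → Matrix ι ι 𝕜} (hQs : Qs ∈ psdDecompositions Q k) :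
    (∑ i, Qs i).rank = ∑ i, (Qs i).rank := by
  simp only [hQs.2.1, hQs.2.2, hk]

variable {k : Fin (n + 1) → ℕ}

theorem partialSumFlag_mapsTo (hk : ∑ i, k i = Q.rank) :
    Set.MapsTo partialSumFlag (psdDecompositions Q k)
      (partialFlags (LinearMap.range Q.mulVecLin) k) := by
  intro Qs hQs
  have hadd := rank_sum_eq_of_mem_psdDecompositions hk hQs
  obtain ⟨-, hsum, hrank⟩ := hQs
  refine ⟨fun i j hij => ?_, fun i => ?_, fun i => ?_⟩
  · exact range_sum_mulVecLin_le_of_subset (Finset.Iic_subset_Iic.2 hij)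
      (rank_sum_eq_of_subset (Finset.subset_univ _) hadd)
  · exact hsum ▸ range_sum_mulVecLin_le_of_subset (Finset.subset_univ _) hadd
  · refine (rank_sum_eq_of_subset (Finset.subset_univ _) hadd).trans ?_
    simp only [hrank]

theorem partialSumFlag_injOn (hQ : Q.PosSemidef) (hk : ∑ i, k i = Q.rank) :
    Set.InjOn partialSumFlag (psdDecompositions Q k) := by
  intro Qs hQs Rs hRs hflag
  have isHermitian_sum {As : Fin (n + 1) → Matrix ι ι 𝕜} (hAs : As ∈ psdDecompositions Q k)
      (s : Finset (Fin (n + 1))) : (∑ j ∈ s, As j).IsHermitian :=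
    (posSemidef_sum s fun j _ => hAs.1 j).isHermitian
  have rank_add_rank_sub {As : Fin (n + 1) → Matrix ι ι 𝕜} (hAs : As ∈ psdDecompositions Q k)
      (s : Finset (Fin (n + 1))) :
      (∑ j ∈ s, As j).rank + (Q - ∑ j ∈ s, As j).rank = Q.rank := by
    simpa only [hAs.2.1] using rank_sum_add_rank_sub_of_subset s.subset_univ
      (rank_sum_eq_of_mem_psdDecompositions hk hAs)
  refine eq_of_sum_Iic_eq fun i => ?_
  induction i using Fin.lastCases with
  | last => rw [← Fin.top_eq_last, Finset.Iic_top, hQs.2.1, hRs.2.1]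
  | cast i =>
    exact eq_of_range_eq_of_rank_add_rank_sub_eq hQ (isHermitian_sum hQs _) (isHermitian_sum hRs _)
      (rank_add_rank_sub hQs _) (rank_add_rank_sub hRs _) (congrFun hflag i)

theorem partialSumFlag_surjOn (hQ : Q.PosSemidef) (hk : ∑ i, k i = Q.rank) :
    Set.SurjOn partialSumFlag (psdDecompositions Q k)
      (partialFlags (LinearMap.range Q.mulVecLin) k) := by
  induction n generalizing Q with
  | zero =>
    refine fun F _ => ⟨fun _ => Q, ⟨fun _ => hQ, by simp, fun i => ?_⟩, Subsingleton.elim _ _⟩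
    rw [← hk, Fin.sum_univ_one, Fin.fin_one_eq_zero i]
  | succ n ih =>
    rintro F ⟨hmono, hle, hdim⟩
    obtain ⟨A, hA, hQA, hrange, hrank⟩ :=
      exists_posSemidef_summand_range_eq hQ (hle (Fin.last n))
    have hkA : ∑ j : Fin (n + 1), k j.castSucc = A.rank := by
      rw [Matrix.rank, hrange, hdim, Fin.sum_Iic_castSucc, ← Fin.top_eq_last, Finset.Iic_top]
    have hF : (fun i => F i.castSucc) ∈
        partialFlags (LinearMap.range A.mulVecLin) fun j => k j.castSucc := by
      refine ⟨fun i j hij => hmono hij, fun i => hrange ▸ hmono (Fin.le_last _), fun i => ?_⟩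
      rw [hdim, Fin.sum_Iic_castSucc]
    obtain ⟨Rs, ⟨hRs, hsum, hrankRs⟩, hflag⟩ := ih hA hkA hF
    refine ⟨Fin.snoc Rs (Q - A), ⟨fun i => ?_, ?_, fun i => ?_⟩, funext fun i => ?_⟩
    · cases i using Fin.lastCases <;> simp [hQA, hRs]
    · simp [Fin.sum_univ_castSucc, hsum]
    · cases i using Fin.lastCases with
      | last =>
        rw [Fin.snoc_last]
        rw [Fin.sum_univ_castSucc] at hk
        lia
      | cast i => rw [Fin.snoc_castSucc, hrankRs]
    · rw [partialSumFlag, Fin.sum_Iic_castSucc]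
      simp only [Fin.snoc_castSucc]
      cases i using Fin.lastCases with
      | last => rw [← Fin.top_eq_last, Finset.Iic_top, hsum, hrange, Fin.top_eq_last]
      | cast i => exact congrFun hflag i

end Flag

open scoped ComplexOrder in
theorem psd_decomposition_flag_bijection_general {𝕜 ι : Type*} [RCLike 𝕜] [Fintype ι] {n : ℕ}
    (Q : Matrix ι ι 𝕜) (hQ : Q.PosSemidef) (k : Fin n → ℕ) (hk : ∑ i, k i = Q.rank) :
    Set.BijOn
      (fun (Qs : Fin n → Matrix ι ι 𝕜) (i : Fin (n - 1)) =>
        LinearMap.range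
          (Matrix.mulVecLin
            (∑ j ∈ Finset.univ.filter (fun j : Fin n => (j : ℕ) ≤ (i : ℕ)), Qs j)))
      {Qs : Fin n → Matrix ι ι 𝕜 |
        (∀ i, (Qs i).PosSemidef) ∧ (∑ i, Qs i) = Q ∧ ∀ i, (Qs i).rank = k i}
      {F : Fin (n - 1) → Submodule 𝕜 (ι → 𝕜) |
        Monotone F ∧ (∀ i, F i ≤ LinearMap.range Q.mulVecLin) ∧
        ∀ i, Module.finrank 𝕜 (F i) =
          ∑ j ∈ Finset.univ.filter (fun j : Fin n => (j : ℕ) ≤ (i : ℕ)), k j} := by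
  cases n with
  | zero =>
    have hQ0 : Q = 0 := eq_zero_of_rank_eq_zero hk.symm
    exact ⟨fun _ _ => ⟨fun i => i.elim0, fun i => i.elim0, fun i => i.elim0⟩,
      fun _ _ _ _ _ => Subsingleton.elim _ _,
      fun F _ => ⟨0, ⟨fun i => i.elim0, hQ0.symm, fun i => i.elim0⟩, funext fun i => i.elim0⟩⟩
  | succ n =>
    have filter_eq_Iic (i : Fin n) :
        Finset.univ.filter (fun j : Fin (n + 1) => (j : ℕ) ≤ (i : ℕ)) = Finset.Iic i.castSucc := by
      ext j
      simp [Fin.le_def]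
    simp only [filter_eq_Iic]
    exact ⟨partialSumFlag_mapsTo hk, partialSumFlag_injOn hQ hk, partialSumFlag_surjOn hQ hk⟩

/-- Let `Q` be a real symmetric PSD `N×N` matrix of rank `k` and
`k₁ + ⋯ + kₙ = k`. The map sending a decomposition `(Q₁, …, Qₙ)` of `Q` into PSD matrices
with `rank Qᵢ = kᵢ` to the flag of ranges of partial sums is a bijection onto the set of
flags `V₁ ⊆ ⋯ ⊆ V_{n−1} ⊆ range Q` with `dim Vᵢ = k₁ + ⋯ + kᵢ`. -/
theorem psd_decomposition_flag_bijection {N n : ℕ}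
    (Q : Matrix (Fin N) (Fin N) ℝ) (hQ : Q.PosSemidef)
    (k : Fin n → ℕ) (hk : ∑ i, k i = Q.rank) :
    Set.BijOn
      (fun (Qs : Fin n → Matrix (Fin N) (Fin N) ℝ) (i : Fin (n - 1)) =>
        LinearMap.range
          (Matrix.mulVecLin
            (∑ j ∈ Finset.univ.filter (fun j : Fin n => (j : ℕ) ≤ (i : ℕ)), Qs j)))
      {Qs : Fin n → Matrix (Fin N) (Fin N) ℝ |
        (∀ i, (Qs i).PosSemidef) ∧ (∑ i, Qs i) = Q ∧ ∀ i, (Qs i).rank = k i}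
      {F : Fin (n - 1) → Submodule ℝ (Fin N → ℝ) |
        Monotone F ∧ (∀ i, F i ≤ LinearMap.range Q.mulVecLin) ∧
        ∀ i, Module.finrank ℝ (F i) =
          ∑ j ∈ Finset.univ.filter (fun j : Fin n => (j : ℕ) ≤ (i : ℕ)), k j} := by
  exact psd_decomposition_flag_bijection_general Q hQ k hk
end
end

section
/- Let Q₁, …, Qₙ be real symmetric positive semidefinite N×N matrices with rank(Q₁ + ⋯ + Qₙ) = rank Q₁ + ⋯ + rank Qₙ, and let pⱼ ∈ range Qⱼ for each j. Then there exists a single vector p' ∈ ℝ^N with Qⱼ p' = pⱼ for all j = 1, …, n; consequently Σⱼ p'ᵀQⱼp' = p'ᵀ(Σⱼ Qⱼ)p'. -/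
open scoped Matrix

noncomputable section

/-!
The sum of linear maps `f i : V → W` factors through the joint map `V → ∏ i, range (f i)`, so its
rank is at most that of the joint map, which in turn is at most `∑ i, rank (f i)`. Under rank
additivity both bounds are equalities, and the joint map is onto.
-/

section LinearMap

open LinearMap Module

variable {ι V W : Type*} [Fintype ι] [AddCommGroup V] [AddCommGroup W]

theorem finrank_range_sum_comp_le_finrank_range_pi {R : Type*} [Ring R] [StrongRankCondition R]
    [Module R V] [Module R W] {U : ι → Type*} [∀ i, AddCommGroup (U i)] [∀ i, Module R (U i)]
    (g : ∀ i, V →ₗ[R] U i) (h : ∀ i, U i →ₗ[R] W) [Module.Finite R (range (LinearMap.pi g))] :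
    finrank R (range (∑ i, h i ∘ₗ g i)) ≤ finrank R (range (LinearMap.pi g)) := by
  have factorization : ∑ i, h i ∘ₗ g i = (∑ i, h i ∘ₗ proj i) ∘ₗ LinearMap.pi g := by
    ext x
    simp
  rw [factorization, range_comp]
  exact Submodule.finrank_map_le _ _

theorem surjective_pi_rangeRestrict_of_finrank_range_sum_eq {K : Type*} [DivisionRing K]
    [Module K V] [Module K W] (f : ι → V →ₗ[K] W) [∀ i, FiniteDimensional K (range (f i))]
    (hrank : finrank K (range (∑ i, f i)) = ∑ i, finrank K (range (f i))) :
    Function.Surjective (LinearMap.pi fun i ↦ (f i).rangeRestrict) := by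
  rw [← range_eq_top]
  refine Submodule.eq_top_of_finrank_eq (le_antisymm (Submodule.finrank_le _) ?_)
  calc
    finrank K (∀ i, range (f i)) = finrank K (range (∑ i, f i)) := by
      rw [finrank_pi_fintype, hrank]
    _ ≤ finrank K (range (LinearMap.pi fun i ↦ (f i).rangeRestrict)) :=
      finrank_range_sum_comp_le_finrank_range_pi (fun i ↦ (f i).rangeRestrict)
        fun i ↦ (range (f i)).subtype

end LinearMap

section Matrix

variable {ι m n K : Type*} [Fintype ι] [Fintype n] [Field K]

theorem exists_forall_mulVec_eq_of_rank_sum_eq (A : ι → Matrix m n K)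
    (hrank : (∑ i, A i).rank = ∑ i, (A i).rank) (b : ι → m → K)
    (hb : ∀ i, b i ∈ LinearMap.range (A i).mulVecLin) :
    ∃ x : n → K, ∀ i, A i *ᵥ x = b i := by
  have mulVecLin_sum : (∑ i, A i).mulVecLin = ∑ i, (A i).mulVecLin :=
    map_sum (Matrix.mulVecBilin K K) A Finset.univ
  rw [Matrix.rank, mulVecLin_sum] at hrank
  obtain ⟨x, hx⟩ := surjective_pi_rangeRestrict_of_finrank_range_sum_eq _ hrank
    fun i ↦ ⟨b i, hb i⟩
  exact ⟨x, fun i ↦ congrArg Subtype.val (congrFun hx i)⟩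

theorem common_preimage_of_rank_additivity_general (Q : ι → Matrix n n K)
    (hrank : (∑ i, Q i).rank = ∑ i, (Q i).rank) (p : ι → n → K)
    (hp : ∀ j, p j ∈ LinearMap.range (Q j).mulVecLin) :
    ∃ p' : n → K, (∀ j, Q j *ᵥ p' = p j) ∧
      ∑ j, p' ⬝ᵥ Q j *ᵥ p' = p' ⬝ᵥ (∑ j, Q j) *ᵥ p' := by
  obtain ⟨p', hp'⟩ := exists_forall_mulVec_eq_of_rank_sum_eq Q hrank p hp
  exact ⟨p', hp', by rw [Matrix.sum_mulVec, dotProduct_sum]⟩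

end Matrix

/-- If `Q₁, …, Qₙ` are real symmetric PSD matrices with
`rank(Q₁ + ⋯ + Qₙ) = rank Q₁ + ⋯ + rank Qₙ` and `pⱼ ∈ range Qⱼ` for each `j`, then there
is a single vector `p'` with `Qⱼ p' = pⱼ` for all `j`; consequently
`Σⱼ p'ᵀ Qⱼ p' = p'ᵀ (Σⱼ Qⱼ) p'`. -/
theorem common_preimage_of_rank_additivity {N n : ℕ}
    (Q : Fin n → Matrix (Fin N) (Fin N) ℝ)
    (hQ : ∀ i, (Q i).PosSemidef)
    (hrank : (∑ i, Q i).rank = ∑ i, (Q i).rank)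
    (p : Fin n → (Fin N → ℝ))
    (hp : ∀ j, p j ∈ LinearMap.range (Q j).mulVecLin) :
    ∃ p' : Fin N → ℝ, (∀ j, (Q j).mulVec p' = p j) ∧
      (∑ j, p' ⬝ᵥ (Q j).mulVec p') = p' ⬝ᵥ (∑ j, Q j).mulVec p' :=
  common_preimage_of_rank_additivity_general Q hrank p hp
end
end

section
/- Let Q be a real symmetric positive semidefinite N×N matrix and c ∈ ℝ. Then the set {p ∈ ℝ^N : there exists x ∈ ℝ^N with Qx = p and xᵀQx ≤ c} is compact. -/
open scoped Matrix

noncomputable section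

/-!
Write `Q = Aᴴ * A`. Then `star x ⬝ᵥ Q *ᵥ x` is the squared Euclidean norm of `A *ᵥ x`, so the set
in question is the image under `Aᴴ` of a sublevel set of the squared norm intersected with the
range of `A`. That intersection is compact because the range of `A` is closed, being a subspace of
a finite-dimensional space.
-/

lemma star_dotProduct_conjTranspose_mul_self_mulVec {R m n : Type*} [NonUnitalSemiring R]
    [StarRing R] [Fintype m] [Fintype n] (A : Matrix m n R) (x : n → R) :
    star x ⬝ᵥ (Aᴴ * A) *ᵥ x = star (A *ᵥ x) ⬝ᵥ A *ᵥ x := by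
  rw [← Matrix.mulVec_mulVec, Matrix.dotProduct_mulVec, Matrix.star_mulVec]

section RCLike

open WithLp
open scoped ComplexOrder

variable {𝕜 m n : Type*} [RCLike 𝕜] [Fintype m] [Fintype n]

lemma re_star_dotProduct_self_eq_norm_sq (y : n → 𝕜) :
    RCLike.re (star y ⬝ᵥ y) = ‖toLp 2 y‖ ^ 2 := by
  rw [← inner_self_eq_norm_sq (𝕜 := 𝕜), EuclideanSpace.inner_toLp_toLp, dotProduct_comm]

lemma isCompact_setOf_re_star_dotProduct_self_le (c : ℝ) :
    IsCompact {y : n → 𝕜 | RCLike.re (star y ⬝ᵥ y) ≤ c} := by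
  have hball : IsCompact (ofLp '' Metric.closedBall (0 : EuclideanSpace 𝕜 n) √c) :=
    (isCompact_closedBall _ _).image (PiLp.continuous_ofLp 2 _)
  refine hball.of_isClosed_subset (isClosed_le (by fun_prop) continuous_const) fun y hy ↦ ?_
  have hnorm : ‖toLp 2 y‖ ≤ √c :=
    Real.le_sqrt_of_sq_le ((re_star_dotProduct_self_eq_norm_sq y).symm.trans_le hy)
  exact ⟨toLp 2 y, mem_closedBall_zero_iff.mpr hnorm, rfl⟩

lemma setOf_conjTranspose_mul_self_mulVec_eq_image (A : Matrix m n 𝕜) (c : ℝ) :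
    {p | ∃ x, (Aᴴ * A) *ᵥ x = p ∧ RCLike.re (star x ⬝ᵥ (Aᴴ * A) *ᵥ x) ≤ c} =
      (Aᴴ *ᵥ ·) '' ({y | RCLike.re (star y ⬝ᵥ y) ≤ c} ∩ LinearMap.range A.mulVecLin) := by
  simp only [star_dotProduct_conjTranspose_mul_self_mulVec]
  ext p
  constructor
  · rintro ⟨x, rfl, hx⟩
    exact ⟨A *ᵥ x, ⟨hx, x, rfl⟩, Matrix.mulVec_mulVec x Aᴴ A⟩
  · rintro ⟨_, ⟨hy, x, rfl⟩, rfl⟩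
    exact ⟨x, (Matrix.mulVec_mulVec x Aᴴ A).symm, hy⟩

lemma isCompact_setOf_conjTranspose_mul_self_mulVec (A : Matrix m n 𝕜) (c : ℝ) :
    IsCompact {p | ∃ x, (Aᴴ * A) *ᵥ x = p ∧ RCLike.re (star x ⬝ᵥ (Aᴴ * A) *ᵥ x) ≤ c} := by
  rw [setOf_conjTranspose_mul_self_mulVec_eq_image]
  have hrange : IsClosed (LinearMap.range A.mulVecLin : Set (m → 𝕜)) :=
    Submodule.closed_of_finiteDimensional _
  exact ((isCompact_setOf_re_star_dotProduct_self_le c).inter_right hrange).image (by fun_prop)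

lemma exists_eq_conjTranspose_mul_self_of_posSemidef {Q : Matrix n n 𝕜} (hQ : Q.PosSemidef) :
    ∃ A : Matrix n n 𝕜, Q = Aᴴ * A := by
  classical
  open scoped MatrixOrder in
  exact CStarAlgebra.nonneg_iff_eq_star_mul_self.mp hQ.nonneg

theorem psd_sublevel_image_compact_general {Q : Matrix n n 𝕜} (hQ : Q.PosSemidef) (c : ℝ) :
    IsCompact {p : n → 𝕜 | ∃ x : n → 𝕜, Q *ᵥ x = p ∧ RCLike.re (star x ⬝ᵥ Q *ᵥ x) ≤ c} := by
  obtain ⟨A, rfl⟩ := exists_eq_conjTranspose_mul_self_of_posSemidef hQ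
  exact isCompact_setOf_conjTranspose_mul_self_mulVec A c

end RCLike

/-- For a real symmetric PSD matrix `Q` and `c ∈ ℝ`, the set
`{p : ∃ x, Qx = p and xᵀQx ≤ c}` is compact. -/
theorem psd_sublevel_image_compact {N : ℕ}
    (Q : Matrix (Fin N) (Fin N) ℝ) (hQ : Q.PosSemidef) (c : ℝ) :
    IsCompact {p : Fin N → ℝ | ∃ x : Fin N → ℝ, Q.mulVec x = p ∧ x ⬝ᵥ Q.mulVec x ≤ c} :=
  psd_sublevel_image_compact_general hQ c
end
end

section
/- Let B be an invertible real symmetric N×N matrix and Q a real symmetric positive semidefinite N×N matrix such that B − 2Q is invertible and such that yᵀQy < 2 (Qy)ᵀ B⁻¹ (Qy) for every y ∈ ℝ^N with Qy ≠ 0. Then for all x, y ∈ ℝ^N, −(1/2)(x − 2Qy)ᵀ B⁻¹ (x − 2Qy) + yᵀQy ≤ −(1/2) xᵀ (B − 2Q)⁻¹ x, with equality when y = −(B − 2Q)⁻¹ x. -/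
open scoped Matrix

noncomputable section

/- Put `z = (B − 2Q)⁻¹ x` and `w = y + z`. Then `x − 2Qy = Bz − 2Qw`, and expanding both quadratic
forms cancels every term linear in `w`: the value at `y` is `−½ xᵀ (B − 2Q)⁻¹ x` plus the quadratic
form `wᵀQw − 2 (Qw)ᵀ B⁻¹ (Qw)`, which vanishes at the critical point `w = 0` and is nonpositive
by assumption. -/

theorem dotProduct_mulVec_comm_of_isSymm {n R : Type*} [Fintype n] [CommSemiring R]
    {A : Matrix n n R} (hA : A.IsSymm) (u v : n → R) :
    u ⬝ᵥ A *ᵥ v = v ⬝ᵥ A *ᵥ u := by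
  rw [← Matrix.dotProduct_transpose_mulVec, hA.eq]

section Ring

variable {n R : Type*} [Fintype n] [CommRing R] {A : Matrix n n R}

theorem sub_dotProduct_mulVec_sub_of_isSymm (hA : A.IsSymm) (u v : n → R) :
    (u - v) ⬝ᵥ A *ᵥ (u - v) = u ⬝ᵥ A *ᵥ u - 2 * (v ⬝ᵥ A *ᵥ u) + v ⬝ᵥ A *ᵥ v := by
  rw [Matrix.mulVec_sub, sub_dotProduct, dotProduct_sub, dotProduct_sub,
    dotProduct_mulVec_comm_of_isSymm hA u v]
  ring

variable [DecidableEq n]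

theorem mulVec_sub_dotProduct_inv_mulVec (hA : A.IsSymm) (hdet : IsUnit A.det) (z v : n → R) :
    (A *ᵥ z - v) ⬝ᵥ A⁻¹ *ᵥ (A *ᵥ z - v) =
      A *ᵥ z ⬝ᵥ z - 2 * (v ⬝ᵥ z) + v ⬝ᵥ A⁻¹ *ᵥ v := by
  have hinv : A⁻¹ *ᵥ (A *ᵥ z) = z := by
    rw [Matrix.mulVec_mulVec, Matrix.nonsing_inv_mul A hdet, Matrix.one_mulVec]
  rw [sub_dotProduct_mulVec_sub_of_isSymm hA.inv, hinv]

end Ring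

section Field

variable {n K : Type*} [Fintype n] [DecidableEq n] [Field K]

/-- The generating-function value `½ B^FT[q₁] + Q[p']`, where `M[v] = vᵀMv` and `B^FT = −B⁻¹`, as a
function of `x = q̃` and the momentum `y = p'`; the Hamiltonian flow of `Q` gives
`q₁ = x − 2Qy`. The inverse is written out, so `B` is meant to be invertible. -/
def generatingFunction (B Q : Matrix n n K) (x y : n → K) : K :=
  -(1 / 2) * ((x - (2 : K) • Q *ᵥ y) ⬝ᵥ B⁻¹ *ᵥ (x - (2 : K) • Q *ᵥ y)) + y ⬝ᵥ Q *ᵥ y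

variable {B Q : Matrix n n K}

theorem generatingFunction_mulVec_sub [NeZero (2 : K)] (hBsymm : B.IsSymm) (hB : IsUnit B.det)
    (hQ : Q.IsSymm) (z w : n → K) :
    generatingFunction B Q ((B - (2 : K) • Q) *ᵥ z) (w - z) =
      -(1 / 2) * ((B - (2 : K) • Q) *ᵥ z ⬝ᵥ z) +
        (w ⬝ᵥ Q *ᵥ w - 2 * (Q *ᵥ w ⬝ᵥ B⁻¹ *ᵥ (Q *ᵥ w))) := by
  have hshift : (B - (2 : K) • Q) *ᵥ z - (2 : K) • Q *ᵥ (w - z) =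
      B *ᵥ z - (2 : K) • Q *ᵥ w := by
    rw [Matrix.sub_mulVec, Matrix.smul_mulVec, Matrix.mulVec_sub, smul_sub]
    abel
  have hcross : z ⬝ᵥ Q *ᵥ w = Q *ᵥ w ⬝ᵥ z := dotProduct_comm _ _
  have hdiag : z ⬝ᵥ Q *ᵥ z = Q *ᵥ z ⬝ᵥ z := dotProduct_comm _ _
  rw [generatingFunction, hshift, mulVec_sub_dotProduct_inv_mulVec hBsymm hB,
    sub_dotProduct_mulVec_sub_of_isSymm hQ, hcross, hdiag]
  simp only [Matrix.sub_mulVec, Matrix.smul_mulVec, Matrix.mulVec_smul, sub_dotProduct,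
    smul_dotProduct, dotProduct_smul, smul_eq_mul]
  field_simp
  ring

theorem generatingFunction_eq_add [NeZero (2 : K)] (hBsymm : B.IsSymm) (hB : IsUnit B.det)
    (hQ : Q.IsSymm) (hBQ : IsUnit (B - (2 : K) • Q).det) {x y w : n → K}
    (hw : w = y + (B - (2 : K) • Q)⁻¹ *ᵥ x) :
    generatingFunction B Q x y =
      -(1 / 2) * (x ⬝ᵥ (B - (2 : K) • Q)⁻¹ *ᵥ x) +
        (w ⬝ᵥ Q *ᵥ w - 2 * (Q *ᵥ w ⬝ᵥ B⁻¹ *ᵥ (Q *ᵥ w))) := by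
  have hx : (B - (2 : K) • Q) *ᵥ ((B - (2 : K) • Q)⁻¹ *ᵥ x) = x := by
    rw [Matrix.mulVec_mulVec, Matrix.mul_nonsing_inv _ hBQ, Matrix.one_mulVec]
  have hy : w - (B - (2 : K) • Q)⁻¹ *ᵥ x = y := sub_eq_of_eq_add hw
  simpa only [hx, hy] using
    generatingFunction_mulVec_sub hBsymm hB hQ ((B - (2 : K) • Q)⁻¹ *ᵥ x) w

theorem generatingFunction_neg_inv_mulVec [NeZero (2 : K)] (hBsymm : B.IsSymm)
    (hB : IsUnit B.det) (hQ : Q.IsSymm) (hBQ : IsUnit (B - (2 : K) • Q).det) (x : n → K) :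
    generatingFunction B Q x (-((B - (2 : K) • Q)⁻¹ *ᵥ x)) =
      -(1 / 2) * (x ⬝ᵥ (B - (2 : K) • Q)⁻¹ *ᵥ x) := by
  rw [generatingFunction_eq_add hBsymm hB hQ hBQ (neg_add_cancel _).symm, Matrix.mulVec_zero,
    dotProduct_zero, zero_dotProduct, mul_zero, sub_zero, add_zero]

variable [LinearOrder K] [IsStrictOrderedRing K]

theorem generatingFunction_le_iff (hBsymm : B.IsSymm) (hB : IsUnit B.det) (hQ : Q.IsSymm)
    (hBQ : IsUnit (B - (2 : K) • Q).det) {x y w : n → K}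
    (hw : w = y + (B - (2 : K) • Q)⁻¹ *ᵥ x) :
    generatingFunction B Q x y ≤ -(1 / 2) * (x ⬝ᵥ (B - (2 : K) • Q)⁻¹ *ᵥ x) ↔
      w ⬝ᵥ Q *ᵥ w ≤ 2 * (Q *ᵥ w ⬝ᵥ B⁻¹ *ᵥ (Q *ᵥ w)) := by
  rw [generatingFunction_eq_add hBsymm hB hQ hBQ hw, add_le_iff_nonpos_right, sub_nonpos]

theorem generating_function_maximum_general (hBsymm : B.IsSymm) (hB : IsUnit B.det)
    (hQ : Q.IsSymm) (hBQ : IsUnit (B - (2 : K) • Q).det)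
    (hcond : ∀ y : n → K, y ⬝ᵥ Q *ᵥ y ≤ 2 * (Q *ᵥ y ⬝ᵥ B⁻¹ *ᵥ (Q *ᵥ y))) :
    (∀ x y : n → K,
      generatingFunction B Q x y ≤ -(1 / 2) * (x ⬝ᵥ (B - (2 : K) • Q)⁻¹ *ᵥ x)) ∧
    ∀ x : n → K,
      generatingFunction B Q x (-((B - (2 : K) • Q)⁻¹ *ᵥ x)) =
        -(1 / 2) * (x ⬝ᵥ (B - (2 : K) • Q)⁻¹ *ᵥ x) :=
  ⟨fun _ _ => (generatingFunction_le_iff hBsymm hB hQ hBQ rfl).2 (hcond _),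
    generatingFunction_neg_inv_mulVec hBsymm hB hQ hBQ⟩

end Field

/-- Let `B` be an invertible real symmetric matrix and `Q` a real symmetric
PSD matrix such that `B − 2Q` is invertible and `yᵀQy < 2 (Qy)ᵀ B⁻¹ (Qy)` whenever
`Qy ≠ 0`. Then for all `x, y`,
`−½ (x − 2Qy)ᵀ B⁻¹ (x − 2Qy) + yᵀQy ≤ −½ xᵀ (B − 2Q)⁻¹ x`,
with equality when `y = −(B − 2Q)⁻¹ x`. -/
theorem generating_function_maximum {N : ℕ}
    (B Q : Matrix (Fin N) (Fin N) ℝ)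
    (hBsymm : B.IsSymm) (hB : IsUnit B.det)
    (hQ : Q.PosSemidef) (hBQ : IsUnit (B - (2 : ℝ) • Q).det)
    (hcond : ∀ y : Fin N → ℝ, Q.mulVec y ≠ 0 →
      y ⬝ᵥ Q.mulVec y < 2 * (Q.mulVec y ⬝ᵥ B⁻¹.mulVec (Q.mulVec y))) :
    (∀ x y : Fin N → ℝ,
      -(1 / 2 : ℝ) * ((x - (2 : ℝ) • Q.mulVec y) ⬝ᵥ B⁻¹.mulVec (x - (2 : ℝ) • Q.mulVec y))
          + y ⬝ᵥ Q.mulVec y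
        ≤ -(1 / 2 : ℝ) * (x ⬝ᵥ (B - (2 : ℝ) • Q)⁻¹.mulVec x)) ∧
    (∀ x : Fin N → ℝ,
      -(1 / 2 : ℝ) *
          ((x - (2 : ℝ) • Q.mulVec (-(B - (2 : ℝ) • Q)⁻¹.mulVec x)) ⬝ᵥ
            B⁻¹.mulVec (x - (2 : ℝ) • Q.mulVec (-(B - (2 : ℝ) • Q)⁻¹.mulVec x)))
          + (-(B - (2 : ℝ) • Q)⁻¹.mulVec x) ⬝ᵥ Q.mulVec (-(B - (2 : ℝ) • Q)⁻¹.mulVec x)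
        = -(1 / 2 : ℝ) * (x ⬝ᵥ (B - (2 : ℝ) • Q)⁻¹.mulVec x)) := by
  refine generating_function_maximum_general hBsymm hB
    (Matrix.isHermitian_iff_isSymm.1 hQ.isHermitian) hBQ fun y => ?_
  exact (eq_or_ne (Q *ᵥ y) 0).elim (fun hy => by simp [hy]) fun hy => (hcond y hy).le
end
end

section
/- Let B be a real symmetric N×N matrix and let P and M be linear subspaces of ℝ^N with xᵀBx > 0 for all nonzero x ∈ P, xᵀBx < 0 for all nonzero x ∈ M, and dim P + dim M = N. Then B is invertible and, counted with multiplicity, B has exactly dim P positive eigenvalues and exactly dim M negative eigenvalues. -/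
open scoped Matrix

noncomputable section

/-!
The signature `(p, q)` of a quadratic form consists of the maximal dimensions of a positive
definite and of a negative definite subspace, and `p + q + dim (radical) = dim V`. Definite
subspaces of complementary dimensions already fill up `V`, so they attain both maxima and leave no
room for a radical. An orthonormal eigenbasis of `B` turns `x ⬝ᵥ B *ᵥ x` into a sum of squares
weighted by the eigenvalues, whose signature, by Sylvester's law of inertia, counts the positive and
the negative eigenvalues.
-/

section DefiniteSubspaces

open Module QuadraticForm

variable {𝕜 V : Type*} [Field 𝕜] [LinearOrder 𝕜] [IsStrictOrderedRing 𝕜] [AddCommGroup V]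
  [Module 𝕜 V] [FiniteDimensional 𝕜 V] {Q : QuadraticForm 𝕜 V} {P M : Submodule 𝕜 V}

theorem sigPos_eq_finrank_of_posDef_of_negDef (hP : (Q.restrict P).PosDef)
    (hM : ((-Q).restrict M).PosDef) (hdim : finrank 𝕜 P + finrank 𝕜 M = finrank 𝕜 V) :
    sigPos Q = finrank 𝕜 P := by
  have hPle := le_sigPos_of_posDef Q hP
  have hMle := le_sigNeg_of_negDef Q hM
  have hsum := sigPos_add_sigNeg_add_radical (Q := Q)
  lia

theorem sigNeg_eq_finrank_of_posDef_of_negDef (hP : (Q.restrict P).PosDef)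
    (hM : ((-Q).restrict M).PosDef) (hdim : finrank 𝕜 P + finrank 𝕜 M = finrank 𝕜 V) :
    sigNeg Q = finrank 𝕜 M := by
  rw [← sigPos_neg]
  exact sigPos_eq_finrank_of_posDef_of_negDef hM (by rwa [neg_neg]) (by rwa [add_comm])

theorem radical_eq_bot_of_posDef_of_negDef (hP : (Q.restrict P).PosDef)
    (hM : ((-Q).restrict M).PosDef) (hdim : finrank 𝕜 P + finrank 𝕜 M = finrank 𝕜 V) :
    Q.radical = ⊥ := by
  have hsum := sigPos_add_sigNeg_add_radical (Q := Q)
  rw [sigPos_eq_finrank_of_posDef_of_negDef hP hM hdim,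
    sigNeg_eq_finrank_of_posDef_of_negDef hP hM hdim, hdim] at hsum
  exact Submodule.finrank_eq_zero.mp (Nat.add_eq_left.mp hsum)

end DefiniteSubspaces

section MatrixForm

variable {R n : Type*} [CommRing R] [Fintype n] [DecidableEq n] {A : Matrix n n R}

theorem toQuadraticForm'_apply (A : Matrix n n R) (x : n → R) :
    A.toQuadraticForm' x = x ⬝ᵥ A *ᵥ x :=
  A.toLinearMap₂'_apply' x x

theorem associated_toQuadraticForm' [Invertible (2 : R)] (hA : A.IsSymm) :
    QuadraticMap.associated A.toQuadraticForm' = A.toLinearMap₂' R :=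
  QuadraticMap.associated_left_inverse R (Matrix.isSymm_toBilin'_iff_isSymm.mpr hA).eq

theorem radical_toQuadraticForm'_eq_bot_iff_det_ne_zero [IsDomain R] [Invertible (2 : R)]
    (hA : A.IsSymm) :
    A.toQuadraticForm'.radical = ⊥ ↔ A.det ≠ 0 := by
  rw [← QuadraticMap.nondegenerate_iff_radical_eq_bot, ← QuadraticMap.nondegenerate_associated_iff,
    associated_toQuadraticForm' hA]
  exact LinearMap.BilinForm.nondegenerate_toBilin'_iff_det_ne_zero

end MatrixForm

section Eigenvalues

theorem star_eigenvectorBasis_dotProduct_mulVec {𝕜 n : Type*} [RCLike 𝕜] [Fintype n]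
    [DecidableEq n] {A : Matrix n n 𝕜} (hA : A.IsHermitian) (i j : n) :
    star (hA.eigenvectorBasis i : n → 𝕜) ⬝ᵥ A *ᵥ hA.eigenvectorBasis j =
      if i = j then (hA.eigenvalues j : 𝕜) else 0 := by
  rw [hA.mulVec_eigenvectorBasis, dotProduct_smul, dotProduct_comm,
    ← EuclideanSpace.inner_eq_star_dotProduct, hA.eigenvectorBasis.inner_eq_ite, smul_ite,
    smul_zero, RCLike.real_smul_eq_coe_mul, mul_one]

variable {n : Type*} [Fintype n] [DecidableEq n] {B : Matrix n n ℝ}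

theorem equivalent_weightedSumSquares_eigenvalues (hB : B.IsHermitian) :
    B.toQuadraticForm'.Equivalent (QuadraticMap.weightedSumSquares ℝ hB.eigenvalues) := by
  let v : Module.Basis n ℝ (n → ℝ) :=
    hB.eigenvectorBasis.toBasis.map (WithLp.linearEquiv 2 ℝ (n → ℝ))
  have hv (i j : n) : v i ⬝ᵥ B *ᵥ v j = if i = j then hB.eigenvalues j else 0 := by
    simpa [v] using star_eigenvectorBasis_dotProduct_mulVec hB i j
  have hortho : (QuadraticMap.associated (R := ℝ) B.toQuadraticForm').IsOrthoᵢ v := by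
    rw [associated_toQuadraticForm' (Matrix.isHermitian_iff_isSymm.mp hB), LinearMap.isOrthoᵢ_def]
    intro i j hij
    rw [Matrix.toLinearMap₂'_apply', hv, if_neg hij]
  have hdiag : (fun i ↦ B.toQuadraticForm' (v i)) = hB.eigenvalues := by
    ext i
    rw [toQuadraticForm'_apply, hv, if_pos rfl]
  rw [← hdiag, ← QuadraticMap.basisRepr_eq_of_iIsOrtho _ v hortho]
  exact ⟨B.toQuadraticForm'.isometryEquivBasisRepr v⟩

theorem sigPos_toQuadraticForm'_eq_card_eigenvalues (hB : B.IsHermitian) :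
    sigPos B.toQuadraticForm' = (Finset.univ.filter fun i ↦ 0 < hB.eigenvalues i).card := by
  rw [QuadraticForm.sigPos_of_equiv_weightedSumSquares
    (equivalent_weightedSumSquares_eigenvalues hB),
    Set.ncard_eq_toFinset_card', Set.toFinset_ofPred]

theorem sigNeg_toQuadraticForm'_eq_card_eigenvalues (hB : B.IsHermitian) :
    sigNeg B.toQuadraticForm' = (Finset.univ.filter fun i ↦ hB.eigenvalues i < 0).card := by
  rw [QuadraticForm.sigNeg_of_equiv_weightedSumSquares
    (equivalent_weightedSumSquares_eigenvalues hB),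
    Set.ncard_eq_toFinset_card', Set.toFinset_ofPred]

end Eigenvalues

theorem inertia_of_definite_subspaces_general {n : Type*} [Fintype n] [DecidableEq n]
    {B : Matrix n n ℝ} (hB : B.IsHermitian) {P M : Submodule ℝ (n → ℝ)}
    (hP : ∀ x ∈ P, x ≠ 0 → 0 < x ⬝ᵥ B *ᵥ x)
    (hM : ∀ x ∈ M, x ≠ 0 → x ⬝ᵥ B *ᵥ x < 0)
    (hdim : Module.finrank ℝ P + Module.finrank ℝ M = Fintype.card n) :
    IsUnit B.det ∧
    (Finset.univ.filter fun i ↦ 0 < hB.eigenvalues i).card = Module.finrank ℝ P ∧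
    (Finset.univ.filter fun i ↦ hB.eigenvalues i < 0).card = Module.finrank ℝ M := by
  have hpos : (B.toQuadraticForm'.restrict P).PosDef := fun x hx ↦ by
    simpa [toQuadraticForm'_apply] using hP x x.2 (by simpa using hx)
  have hneg : ((-B.toQuadraticForm').restrict M).PosDef := fun x hx ↦ by
    simpa [toQuadraticForm'_apply] using hM x x.2 (by simpa using hx)
  rw [← Module.finrank_fintype_fun_eq_card ℝ] at hdim
  rw [isUnit_iff_ne_zero,
    ← radical_toQuadraticForm'_eq_bot_iff_det_ne_zero (Matrix.isHermitian_iff_isSymm.mp hB),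
    ← sigPos_toQuadraticForm'_eq_card_eigenvalues hB,
    ← sigNeg_toQuadraticForm'_eq_card_eigenvalues hB]
  exact ⟨radical_eq_bot_of_posDef_of_negDef hpos hneg hdim,
    sigPos_eq_finrank_of_posDef_of_negDef hpos hneg hdim,
    sigNeg_eq_finrank_of_posDef_of_negDef hpos hneg hdim⟩

/-- Let `B` be a real symmetric matrix, positive definite on a subspace `P`
and negative definite on a subspace `M`, with `dim P + dim M = N`. Then `B` is
invertible with exactly `dim P` positive and `dim M` negative eigenvalues (counted with
multiplicity). -/
theorem inertia_of_definite_subspaces {N : ℕ}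
    (B : Matrix (Fin N) (Fin N) ℝ) (hB : B.IsHermitian)
    (P M : Submodule ℝ (Fin N → ℝ))
    (hP : ∀ x ∈ P, x ≠ 0 → 0 < x ⬝ᵥ B.mulVec x)
    (hM : ∀ x ∈ M, x ≠ 0 → x ⬝ᵥ B.mulVec x < 0)
    (hdim : Module.finrank ℝ P + Module.finrank ℝ M = N) :
    IsUnit B.det ∧
    (Finset.univ.filter fun i => 0 < hB.eigenvalues i).card = Module.finrank ℝ P ∧
    (Finset.univ.filter fun i => hB.eigenvalues i < 0).card = Module.finrank ℝ M :=
  inertia_of_definite_subspaces_general hB hP hM (by rwa [Fintype.card_fin])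
end
end
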